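/- (Theorem 2.3: Gaussian-tail characterization of T_1.) A probability measure μ on (E,d) satisfies the T_1(C) inequality for some constant C > 0 if and only if there exists δ > 0 such that ∬_{E×E} exp(δ·d(x,y)²) dμ(x) dμ(y) < +∞. In the latter case one may take C ≤ (2/δ)·sup_{k≥1} ( ((k!)²/(2k)!) · ∬ exp(δ d(x,y)²) dμ(x) dμ(y) )^{1/k}, which is finite. -/

import Mathlib

open MeasureTheory ProbabilityTheory ENNReal

noncomputable section

/-- `π` is a coupling of `μ` and `ν`. -/
def IsCoupling {E F : Type*} [MeasurableSpace E] [MeasurableSpace F]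
    (π : Measure (E × F)) (μ : Measure E) (ν : Measure F) : Prop :=
  π.map Prod.fst = μ ∧ π.map Prod.snd = ν

/-- The `L^p`-Wasserstein distance associated to the cost function `d`, valued in `ℝ≥0∞`. -/
def wassersteinDist {E : Type*} [MeasurableSpace E] (p : ℝ) (d : E → E → ℝ)
    (μ ν : Measure E) : ℝ≥0∞ :=
  ⨅ (π : Measure (E × E)) (_ : IsCoupling π μ ν),
    (∫⁻ z, ENNReal.ofReal (d z.1 z.2) ^ p ∂π) ^ (1 / p)

/-- The `L^p`-Wasserstein distance for an extended (`ℝ≥0∞`-valued) pseudo-metric `d`. -/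
def wassersteinDistE {E : Type*} [MeasurableSpace E] (p : ℝ) (d : E → E → ℝ≥0∞)
    (μ ν : Measure E) : ℝ≥0∞ :=
  ⨅ (π : Measure (E × E)) (_ : IsCoupling π μ ν),
    (∫⁻ z, d z.1 z.2 ^ p ∂π) ^ (1 / p)

open Classical in
/-- Relative entropy (Kullback information) `H(ν | μ)`, valued in `ℝ≥0∞`. -/
def relEntropy {E : Type*} [MeasurableSpace E] (ν μ : Measure E) : ℝ≥0∞ :=
  if ν ≪ μ ∧ Integrable (fun x => Real.log ((ν.rnDeriv μ x).toReal)) ν then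
    ENNReal.ofReal (∫ x, Real.log ((ν.rnDeriv μ x).toReal) ∂ν)
  else ∞

/-- The transportation cost-information inequality `T_p(C)` for `μ` on `(E, d)`:
`W_p(μ, ν) ≤ √(2 C H(ν|μ))` for every probability measure `ν`, written in the equivalent
squared form `W_p(μ,ν)² ≤ 2C·H(ν|μ)` in `ℝ≥0∞`. -/
def TpIneq {E : Type*} [MeasurableSpace E] (p : ℝ) (d : E → E → ℝ) (C : ℝ)
    (μ : Measure E) : Prop :=
  ∀ ν : Measure E, IsProbabilityMeasure ν →
    wassersteinDist p d μ ν ^ 2 ≤ ENNReal.ofReal (2 * C) * relEntropy ν μ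

/-- The transportation cost-information inequality `T_p(C)` for an extended pseudo-metric. -/
def TpIneqE {E : Type*} [MeasurableSpace E] (p : ℝ) (d : E → E → ℝ≥0∞) (C : ℝ)
    (μ : Measure E) : Prop :=
  ∀ ν : Measure E, IsProbabilityMeasure ν →
    wassersteinDistE p d μ ν ^ 2 ≤ ENNReal.ofReal (2 * C) * relEntropy ν μ

/-!
Suppose `M = ∬ exp(δ d²) dμ dμ` is finite and write `ν = gμ`. Leave the common part `min(1, g) μ`
in place and send `α = (1 - g)⁺ μ` to `β = (g - 1)⁺ μ`, which have the same mass `T`, by the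
product coupling; by Cauchy–Schwarz, `W₁(μ, ν)² ≤ ∬ d² dα dβ`. With `b = (1 - g)⁺`,
`a = (g - 1)⁺` and `kl x = x log x - x + 1`, the Fenchel–Young inequality
`x s + x ≤ x log x + exp s`, taken at `x = b a / T²` and `s = δ d²`, together with elementary
bounds of `b log (b / T)` and `a log (a / T)` by `kl (1 - b)` and `kl (1 + a)`, gives
`δ ∬ d² dα dβ + T² ≤ 2 H(ν|μ) + T² M`. Since `M ≥ 1` and `T² ≤ 2 H(ν|μ)`, this yields
`δ W₁(μ, ν)² ≤ 2 H(ν|μ) M`, that is `T₁(M / δ)`. The term `k = 1` of the supremum is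
`M / 2`, so the explicit constant is at least `M / δ`.

Conversely, by Marton's argument, applying `T₁(C)` to `μ` conditioned on `A = {d(·, x₀) ≤ n}` and
on `B = {d(·, x₀) ≥ t}`, whose relative entropies are `-log μ(A)` and `-log μ(B)`, gives the tail
bound `μ(B) ≤ exp(-(t - m)² / (2C))`. Hence `exp(2δ d(·, x₀)²)` is integrable for `4δC < 1`, and
`d(x, y)² ≤ 2 d(x, x₀)² + 2 d(y, x₀)²` concludes.
-/

open InformationTheory
open scoped NNReal

section KLFun

lemma mul_log_div_le {t u a : ℝ} (ht : 0 < t) (hu : 0 < u) (ha : 0 < a) :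
    t * Real.log (a / t) ≤ a / u + t * (Real.log u - 1) := by
  have h := Real.log_le_sub_one_of_pos (div_pos (div_pos ha ht) hu)
  rw [Real.log_div (div_pos ha ht).ne' hu.ne'] at h
  calc t * Real.log (a / t) ≤ t * (a / t / u - 1 + Real.log u) := by gcongr; linarith
    _ = a / u + t * (Real.log u - 1) := by field_simp; ring

lemma sq_le_two_mul_klFun_one_sub {b : ℝ} (hb : 0 ≤ b) (hb1 : b ≤ 1) :
    b ^ 2 ≤ 2 * klFun (1 - b) := by
  rcases hb1.eq_or_lt with rfl | hb1
  · norm_num [klFun]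
  have hpos : 0 < 1 - b := by linarith
  -- `y ≤ sinh y` at `y = -log (1 - b)`
  have hsinh := Real.self_le_sinh_iff.2 (Real.log_nonneg ((one_le_inv₀ hpos).2 (by linarith)))
  rw [Real.sinh_log (inv_pos.2 hpos), inv_inv, Real.log_inv] at hsinh
  have hmul := mul_le_mul_of_nonneg_left hsinh hpos.le
  have hcancel : (1 - b) * (((1 - b)⁻¹ - (1 - b)) / 2) = (1 - (1 - b) ^ 2) / 2 := by field_simp
  rw [klFun_apply]
  linarith

lemma mul_log_one_add_le_two_mul_klFun_one_add {a : ℝ} (ha : 0 ≤ a) :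
    a * Real.log (1 + a) ≤ 2 * klFun (1 + a) := by
  have hlog := Real.le_log_one_add_of_nonneg ha
  rw [div_le_iff₀' (by linarith)] at hlog
  rw [klFun_apply]
  linarith

lemma sq_div_one_add_le_two_mul_klFun_one_add {a : ℝ} (ha : 0 ≤ a) :
    a ^ 2 / (1 + a) ≤ 2 * klFun (1 + a) := by
  have hlog : 2 * a / (a + 2) ≤ Real.log (1 + a) := Real.le_log_one_add_of_nonneg ha
  calc a ^ 2 / (1 + a) ≤ 2 * a ^ 2 / (a + 2) := by
        rw [div_le_div_iff₀ (by positivity) (by positivity)]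
        nlinarith [pow_nonneg ha 3]
    _ = 2 * ((1 + a) * (2 * a / (a + 2)) - a) := by field_simp; ring
    _ ≤ 2 * ((1 + a) * Real.log (1 + a) - a) := by gcongr
    _ = 2 * klFun (1 + a) := by rw [klFun_apply]; ring

lemma mul_mul_log_div_le_two_mul_klFun_one_sub {b t : ℝ} (hb : 0 < b) (hb1 : b ≤ 1)
    (ht : 0 < t) : t * (b * Real.log (b / t)) ≤ 2 * klFun (1 - b) :=
  calc t * (b * Real.log (b / t)) = b * (t * Real.log (b / t)) := by ring
    _ ≤ b * (b / 1 + t * (Real.log 1 - 1)) := by gcongr; exact mul_log_div_le ht one_pos hb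
    _ ≤ b ^ 2 := by rw [Real.log_one]; nlinarith [mul_pos hb ht]
    _ ≤ 2 * klFun (1 - b) := sq_le_two_mul_klFun_one_sub hb.le hb1

lemma mul_mul_log_div_le_two_mul_klFun_one_add {a t : ℝ} (ha : 0 < a) (ht : 0 < t)
    (ht1 : t ≤ 1) : t * (a * Real.log (a / t)) ≤ 2 * klFun (1 + a) := by
  have hpos : 0 < 1 + a := by linarith
  have hzero := sq_div_one_add_le_two_mul_klFun_one_add ha.le
  have hone := mul_log_one_add_le_two_mul_klFun_one_add ha.le
  -- The tangent bound at `u = 1 + a` is affine in `t`, so the endpoints `t = 0, 1` suffice.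
  calc t * (a * Real.log (a / t)) = a * (t * Real.log (a / t)) := by ring
    _ ≤ a * (a / (1 + a) + t * (Real.log (1 + a) - 1)) := by
      gcongr; exact mul_log_div_le ht hpos ha
    _ = (1 - t) * (a ^ 2 / (1 + a)) + t * (a * Real.log (1 + a) - a / (1 + a)) := by
      field_simp; ring
    _ ≤ (1 - t) * (2 * klFun (1 + a)) + t * (2 * klFun (1 + a)) := by
      have : 0 ≤ a / (1 + a) := by positivity
      have : 0 ≤ 1 - t := by linarith
      gcongr; linarith
    _ = 2 * klFun (1 + a) := by ring

lemma mul_add_self_le_mul_log_add_exp {x : ℝ} (hx : 0 < x) (s : ℝ) :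
    x * s + x ≤ x * Real.log x + Real.exp s := by
  have h := mul_le_mul_of_nonneg_left (Real.add_one_le_exp (s - Real.log x)) hx.le
  rw [Real.exp_sub, Real.exp_log hx, mul_div_cancel₀ _ hx.ne'] at h
  linarith

lemma mul_mul_add_le_klFun_add_exp {a b t : ℝ} (ha : 0 ≤ a) (hb : 0 ≤ b) (hb1 : b ≤ 1)
    (ht : 0 ≤ t) (ht1 : t ≤ 1) (s : ℝ) :
    t * (b * a * s + b * a) ≤
      2 * (b * klFun (1 + a)) + 2 * (klFun (1 - b) * a) + t ^ 3 * Real.exp s := by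
  have hkla : 0 ≤ klFun (1 + a) := klFun_nonneg (by linarith)
  have hklb : 0 ≤ klFun (1 - b) := klFun_nonneg (by linarith)
  have hrhs : 0 ≤ 2 * (b * klFun (1 + a)) + 2 * (klFun (1 - b) * a) + t ^ 3 * Real.exp s := by
    positivity
  rcases ha.eq_or_lt with rfl | ha
  · simpa using hrhs
  rcases hb.eq_or_lt with rfl | hb
  · simpa using hrhs
  rcases ht.eq_or_lt with rfl | ht
  · simpa using hrhs
  calc t * (b * a * s + b * a)
      = t ^ 3 * (b / t * (a / t) * s + b / t * (a / t)) := by field_simp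
    _ ≤ t ^ 3 * (b / t * (a / t) * Real.log (b / t * (a / t)) + Real.exp s) := by
      gcongr ?_ * ?_
      exact mul_add_self_le_mul_log_add_exp (by positivity) s
    _ = b * (t * (a * Real.log (a / t))) + t * (b * Real.log (b / t)) * a +
          t ^ 3 * Real.exp s := by
      rw [Real.log_mul (by positivity) (by positivity)]
      field_simp
      ring
    _ ≤ b * (2 * klFun (1 + a)) + 2 * klFun (1 - b) * a + t ^ 3 * Real.exp s := by
      gcongr b * ?_ + ?_ * a + _
      · exact mul_mul_log_div_le_two_mul_klFun_one_add ha ht ht1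
      · exact mul_mul_log_div_le_two_mul_klFun_one_sub hb hb1 ht
    _ = _ := by ring

lemma klFun_max_one_add_klFun_min_one (x : ℝ) : klFun (max x 1) + klFun (min x 1) = klFun x := by
  rcases le_total x 1 with h | h <;> simp [h, klFun_one]

end KLFun

section Couplings

variable {E : Type*} [MeasurableSpace E] {d : E → E → ℝ}

lemma IsCoupling.swap {F : Type*} [MeasurableSpace F] {π : Measure (E × F)} {μ : Measure E}
    {ν : Measure F} (h : IsCoupling π μ ν) : IsCoupling (π.map Prod.swap) ν μ := by
  constructor
  · rw [Measure.map_map measurable_fst measurable_swap]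
    exact h.2
  · rw [Measure.map_map measurable_snd measurable_swap]
    exact h.1

lemma wassersteinDist_comm (hsymm : ∀ x y, d x y = d y x) (p : ℝ) (μ ν : Measure E) :
    wassersteinDist p d μ ν = wassersteinDist p d ν μ := by
  have hle (μ ν : Measure E) : wassersteinDist p d μ ν ≤ wassersteinDist p d ν μ :=
    le_iInf₂ fun π hπ => (iInf₂_le (π.map Prod.swap) hπ.swap).trans_eq <| by
      have hmap : π.map Prod.swap = π.map MeasurableEquiv.prodComm := rfl
      simp [hmap, lintegral_map_equiv, MeasurableEquiv.prodComm, hsymm]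
  exact (hle μ ν).antisymm (hle ν μ)

lemma lintegral_le_lintegral_add_wassersteinDist {μ ν : Measure E} {F G : E → ℝ≥0∞}
    (hF : Measurable F) (hG : Measurable G) (hFG : ∀ x y, F x ≤ G y + ENNReal.ofReal (d x y)) :
    ∫⁻ x, F x ∂μ ≤ ∫⁻ y, G y ∂ν + wassersteinDist 1 d μ ν := by
  rw [← tsub_le_iff_left]
  refine le_iInf₂ fun π hπ => ?_
  rw [tsub_le_iff_left, ← hπ.1, ← hπ.2, lintegral_map hF measurable_fst,
    lintegral_map hG measurable_snd]
  simp only [ENNReal.rpow_one, div_one]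
  rw [← lintegral_add_left (by fun_prop)]
  exact lintegral_mono fun z => hFG z.1 z.2

lemma isCoupling_smul_prod_add_map_diag (κ α β : Measure E) [IsFiniteMeasure α]
    [IsFiniteMeasure β] (hαβ : α Set.univ = β Set.univ) :
    IsCoupling ((α Set.univ)⁻¹ • α.prod β + κ.map (fun x => (x, x))) (α + κ) (β + κ) := by
  have hdiag : Measurable fun x : E => (x, x) := by fun_prop
  have hmass (ρ : Measure E) [IsFiniteMeasure ρ] : (ρ Set.univ)⁻¹ • ρ Set.univ • ρ = ρ := by
    by_cases h0 : ρ Set.univ = 0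
    · simp [Measure.measure_univ_eq_zero.1 h0]
    · rw [smul_smul, ENNReal.inv_mul_cancel h0 (measure_ne_top ρ _), one_smul]
  constructor
  · rw [Measure.map_add _ _ measurable_fst, Measure.map_map measurable_fst hdiag,
      Measure.map_smul, Measure.map_fst_prod, ← hαβ, hmass]
    exact congrArg _ Measure.map_id
  · rw [Measure.map_add _ _ measurable_snd, Measure.map_map measurable_snd hdiag,
      Measure.map_smul, Measure.map_snd_prod, hαβ, hmass]
    exact congrArg _ Measure.map_id

lemma sq_lintegral_le_measure_univ_mul_lintegral_sq {α : Type*} [MeasurableSpace α]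
    (ρ : Measure α) {f : α → ℝ≥0∞} (hf : AEMeasurable f ρ) :
    (∫⁻ x, f x ∂ρ) ^ 2 ≤ ρ Set.univ * ∫⁻ x, f x ^ 2 ∂ρ := by
  have h := ENNReal.lintegral_mul_le_Lp_mul_Lq ρ Real.HolderConjugate.two_two hf
    (g := fun _ => 1) aemeasurable_const
  simp only [Pi.mul_apply, mul_one, ENNReal.one_rpow, lintegral_const, one_mul] at h
  calc (∫⁻ x, f x ∂ρ) ^ 2
      ≤ ((∫⁻ x, f x ^ (2 : ℝ) ∂ρ) ^ (1 / 2 : ℝ) * ρ Set.univ ^ (1 / 2 : ℝ)) ^ 2 := by gcongr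
    _ = ρ Set.univ * ∫⁻ x, f x ^ 2 ∂ρ := by
      rw [mul_pow, ← ENNReal.rpow_mul_natCast, ← ENNReal.rpow_mul_natCast, mul_comm]
      norm_num

lemma wassersteinDist_one_add_sq_le (hd : Measurable fun q : E × E => d q.1 q.2)
    (hd0 : ∀ x, d x x = 0) (κ α β : Measure E) [IsFiniteMeasure α] [IsFiniteMeasure β]
    (hαβ : α Set.univ = β Set.univ) :
    wassersteinDist 1 d (α + κ) (β + κ) ^ 2 ≤
      ∫⁻ z, ENNReal.ofReal (d z.1 z.2) ^ 2 ∂α.prod β := by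
  have hdiag : ∫⁻ z, ENNReal.ofReal (d z.1 z.2) ∂κ.map (fun x => (x, x)) = 0 := by
    rw [lintegral_map hd.ennreal_ofReal (by fun_prop)]
    simp [hd0]
  have hle : wassersteinDist 1 d (α + κ) (β + κ) ≤
      (α Set.univ)⁻¹ * ∫⁻ z, ENNReal.ofReal (d z.1 z.2) ∂α.prod β :=
    (iInf₂_le ((α Set.univ)⁻¹ • α.prod β + κ.map fun x => (x, x))
      (isCoupling_smul_prod_add_map_diag κ α β hαβ)).trans_eq <| by
      simp only [ENNReal.rpow_one, div_one, lintegral_add_measure, lintegral_smul_measure, hdiag,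
        add_zero, smul_eq_mul]
  have hcs := sq_lintegral_le_measure_univ_mul_lintegral_sq (α.prod β)
    hd.ennreal_ofReal.aemeasurable
  rw [← Set.univ_prod_univ, Measure.prod_prod, ← hαβ, ← sq] at hcs
  calc wassersteinDist 1 d (α + κ) (β + κ) ^ 2
      ≤ ((α Set.univ)⁻¹ * ∫⁻ z, ENNReal.ofReal (d z.1 z.2) ∂α.prod β) ^ 2 := by gcongr
    _ ≤ (α Set.univ)⁻¹ ^ 2 *
          (α Set.univ ^ 2 * ∫⁻ z, ENNReal.ofReal (d z.1 z.2) ^ 2 ∂α.prod β) := by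
      rw [mul_pow]; gcongr
    _ = ((α Set.univ)⁻¹ * α Set.univ) ^ 2 *
          ∫⁻ z, ENNReal.ofReal (d z.1 z.2) ^ 2 ∂α.prod β := by ring
    _ ≤ ∫⁻ z, ENNReal.ofReal (d z.1 z.2) ^ 2 ∂α.prod β :=
      mul_le_of_le_one_left' (pow_le_one₀ zero_le (ENNReal.inv_mul_le_one _))

lemma withDensity_tsub_add_withDensity_min (μ : Measure E) {f g : E → ℝ≥0∞}
    (hf : Measurable f) (hg : Measurable g) :
    μ.withDensity (fun x => f x - g x) + μ.withDensity (fun x => min (f x) (g x)) =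
      μ.withDensity f := by
  rw [← withDensity_add_left (by fun_prop)]
  congr 1
  ext x
  exact tsub_add_min

lemma lintegral_tsub_comm {μ : Measure E} {f g : E → ℝ≥0∞} (hf : Measurable f)
    (hg : Measurable g) (hfg : ∫⁻ x, f x ∂μ = ∫⁻ x, g x ∂μ) (hfin : ∫⁻ x, f x ∂μ ≠ ∞) :
    ∫⁻ x, f x - g x ∂μ = ∫⁻ x, g x - f x ∂μ := by
  have hmin : ∫⁻ x, min (f x) (g x) ∂μ ≠ ∞ :=
    ne_top_of_le_ne_top hfin (lintegral_mono fun x => min_le_left _ _)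
  refine (ENNReal.add_left_inj hmin).1 ?_
  calc ∫⁻ x, f x - g x ∂μ + ∫⁻ x, min (f x) (g x) ∂μ = ∫⁻ x, f x ∂μ := by
        rw [← lintegral_add_left (by fun_prop)]
        simp only [tsub_add_min]
    _ = ∫⁻ x, g x - f x ∂μ + ∫⁻ x, min (f x) (g x) ∂μ := by
        rw [hfg, ← lintegral_add_left (by fun_prop)]
        simp only [min_comm (f _), tsub_add_min]

lemma wassersteinDist_one_withDensity_sq_le (hd : Measurable fun q : E × E => d q.1 q.2)
    (hd0 : ∀ x, d x x = 0) {μ : Measure E} {f g : E → ℝ≥0∞} (hf : Measurable f)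
    (hg : Measurable g) (hfg : ∫⁻ x, f x ∂μ = ∫⁻ x, g x ∂μ) (hfin : ∫⁻ x, f x ∂μ ≠ ∞) :
    wassersteinDist 1 d (μ.withDensity f) (μ.withDensity g) ^ 2 ≤
      ∫⁻ z, ENNReal.ofReal (d z.1 z.2) ^ 2
        ∂(μ.withDensity fun x => f x - g x).prod (μ.withDensity fun x => g x - f x) := by
  have := isFiniteMeasure_withDensity
    (ne_top_of_le_ne_top hfin (lintegral_mono fun x => tsub_le_self (b := g x)))
  have := isFiniteMeasure_withDensity
    (ne_top_of_le_ne_top (hfg ▸ hfin) (lintegral_mono fun x => tsub_le_self (b := f x)))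
  have hmass : μ.withDensity (fun x => f x - g x) Set.univ =
      μ.withDensity (fun x => g x - f x) Set.univ := by
    simp only [withDensity_apply _ MeasurableSet.univ, setLIntegral_univ]
    exact lintegral_tsub_comm hf hg hfg hfin
  have h := wassersteinDist_one_add_sq_le hd hd0
    (μ.withDensity fun x => min (f x) (g x)) _ _ hmass
  rw [withDensity_tsub_add_withDensity_min μ hf hg] at h
  simpa only [min_comm (f _), withDensity_tsub_add_withDensity_min μ hg hf] using h

end Couplings

section EntropyInequality

variable {E : Type*} [MeasurableSpace E]

lemma ennreal_mul_mul_add_le_klFun_add_exp {a b t : ℝ≥0} (hb : b ≤ 1) (ht : t ≤ 1) {s : ℝ}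
    (hs : 0 ≤ s) :
    (t : ℝ≥0∞) * (b * a * ENNReal.ofReal s + b * a) ≤
      2 * (b * ENNReal.ofReal (klFun (1 + a))) + 2 * (ENNReal.ofReal (klFun (1 - b)) * a) +
        t ^ 3 * ENNReal.ofReal (Real.exp s) := by
  have hb' : (b : ℝ) ≤ 1 := hb
  have hkla : 0 ≤ klFun (1 + a) := klFun_nonneg (by positivity)
  have hklb : 0 ≤ klFun (1 - b) := klFun_nonneg (by linarith)
  simp only [ENNReal.ofReal]
  norm_cast
  rw [← NNReal.coe_le_coe]
  push_cast
  simp only [Real.coe_toNNReal _ hs, Real.coe_toNNReal _ hkla, Real.coe_toNNReal _ hklb,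
    Real.coe_toNNReal _ (Real.exp_nonneg s)]
  exact mul_mul_add_le_klFun_add_exp a.2 b.2 hb' t.2 ht s

lemma lintegral_prod_add_sq_le_klFun_add_exp {F : Type*} [MeasurableSpace F] {μ : Measure E}
    {ν : Measure F} [SFinite μ] [SFinite ν] {b : E → ℝ≥0} {a : F → ℝ≥0} {s : E × F → ℝ}
    (hb : Measurable b) (ha : Measurable a) (hs : Measurable s) (hb1 : ∀ x, b x ≤ 1)
    (hs0 : ∀ z, 0 ≤ s z) {t : ℝ≥0} (ht0 : t ≠ 0) (ht : t ≤ 1) (hbt : ∫⁻ x, b x ∂μ = t)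
    (hat : ∫⁻ y, a y ∂ν = t) :
    ∫⁻ z, b z.1 * a z.2 * ENNReal.ofReal (s z) ∂μ.prod ν + t ^ 2 ≤
      2 * (∫⁻ y, ENNReal.ofReal (klFun (1 + a y)) ∂ν + ∫⁻ x, ENNReal.ofReal (klFun (1 - b x)) ∂μ) +
        t ^ 2 * ∫⁻ z, ENNReal.ofReal (Real.exp (s z)) ∂μ.prod ν := by
  have hka : Measurable fun y => ENNReal.ofReal (klFun (1 + a y)) :=
    (measurable_klFun.comp (by fun_prop)).ennreal_ofReal
  have hkb : Measurable fun x => ENNReal.ofReal (klFun (1 - b x)) :=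
    (measurable_klFun.comp (by fun_prop)).ennreal_ofReal
  have hb' : AEMeasurable (fun x => (b x : ℝ≥0∞)) μ := by fun_prop
  have ha' : AEMeasurable (fun y => (a y : ℝ≥0∞)) ν := by fun_prop
  have hint := lintegral_mono (μ := μ.prod ν) fun z =>
    ennreal_mul_mul_add_le_klFun_add_exp (a := a z.2) (hb1 z.1) ht (hs0 z)
  rw [lintegral_const_mul _ (by fun_prop), lintegral_add_right _ (by fun_prop),
    lintegral_prod_mul hb' ha', lintegral_add_right _ (by fun_prop),
    lintegral_add_right _ (by fun_prop), lintegral_const_mul _ (by fun_prop),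
    lintegral_const_mul _ (by fun_prop), lintegral_const_mul _ (by fun_prop),
    lintegral_prod_mul hb' hka.aemeasurable, lintegral_prod_mul hkb.aemeasurable ha',
    hbt, hat] at hint
  have ht0' : (t : ℝ≥0∞) ≠ 0 := by simpa using ht0
  refine (ENNReal.mul_le_mul_iff_right ht0' ENNReal.coe_ne_top).1 ?_
  rw [sq (t : ℝ≥0∞)]
  exact hint.trans_eq (by ring)

lemma sq_lintegral_le_two_mul_lintegral_klFun_one_sub {μ : Measure E} [IsProbabilityMeasure μ]
    {b : E → ℝ≥0} (hb : Measurable b) (hb1 : ∀ x, b x ≤ 1) :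
    (∫⁻ x, b x ∂μ) ^ 2 ≤ 2 * ∫⁻ x, ENNReal.ofReal (klFun (1 - b x)) ∂μ := by
  have hkb : Measurable fun x => ENNReal.ofReal (klFun (1 - b x)) :=
    (measurable_klFun.comp (by fun_prop)).ennreal_ofReal
  calc (∫⁻ x, b x ∂μ) ^ 2 ≤ μ Set.univ * ∫⁻ x, (b x : ℝ≥0∞) ^ 2 ∂μ :=
        sq_lintegral_le_measure_univ_mul_lintegral_sq μ (by fun_prop)
    _ ≤ ∫⁻ x, 2 * ENNReal.ofReal (klFun (1 - b x)) ∂μ := by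
      rw [measure_univ, one_mul]
      refine lintegral_mono fun x => ?_
      rw [← ENNReal.ofReal_coe_nnreal, ← ENNReal.ofReal_pow (NNReal.coe_nonneg _),
        ← ENNReal.ofReal_ofNat 2, ← ENNReal.ofReal_mul zero_le_two]
      exact ENNReal.ofReal_le_ofReal (sq_le_two_mul_klFun_one_sub (b x).coe_nonneg (hb1 x))
    _ = 2 * ∫⁻ x, ENNReal.ofReal (klFun (1 - b x)) ∂μ := lintegral_const_mul _ hkb

lemma lintegral_klFun_one_add_add_klFun_one_sub {μ : Measure E} {g : E → ℝ≥0}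
    (hg : Measurable g) :
    ∫⁻ x, ENNReal.ofReal (klFun (1 + ↑(g x - 1))) ∂μ +
        ∫⁻ x, ENNReal.ofReal (klFun (1 - ↑(1 - g x))) ∂μ =
      ∫⁻ x, ENNReal.ofReal (klFun (g x)) ∂μ := by
  have hmax (x : E) : 1 + ((g x - 1 : ℝ≥0) : ℝ) = max (g x : ℝ) 1 := by
    rw [NNReal.coe_sub_def, NNReal.coe_one, ← max_add_add_left]
    simp
  have hmin (x : E) : 1 - ((1 - g x : ℝ≥0) : ℝ) = min (g x : ℝ) 1 := by
    rw [NNReal.coe_sub_def, NNReal.coe_one, ← min_sub_sub_left]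
    simp
  simp only [hmax, hmin]
  have hkl : Measurable fun x => ENNReal.ofReal (klFun (max (g x : ℝ) 1)) :=
    (measurable_klFun.comp (by fun_prop)).ennreal_ofReal
  rw [← lintegral_add_left hkl]
  refine lintegral_congr fun x => ?_
  rw [← ENNReal.ofReal_add (klFun_nonneg (by positivity)) (klFun_nonneg (by positivity)),
    klFun_max_one_add_klFun_min_one]

lemma le_mul_of_add_le_add_mul {j q h m : ℝ≥0∞} (hq : q ≠ ∞) (hqh : q ≤ h) (hm : 1 ≤ m)
    (hj : j + q ≤ h + q * m) : j ≤ h * m := by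
  obtain ⟨r, rfl⟩ := exists_add_of_le hm
  refine (ENNReal.add_le_add_iff_right hq).1 (hj.trans ?_)
  calc h + q * (1 + r) = h + q * r + q := by ring
    _ ≤ h + h * r + q := by gcongr
    _ = h * (1 + r) + q := by ring

lemma lintegral_prod_tsub_le_klFun_mul_exp {μ : Measure E} [IsProbabilityMeasure μ] {g : E → ℝ≥0}
    (hg : Measurable g) (hg1 : ∫⁻ x, g x ∂μ = 1) {s : E × E → ℝ} (hs : Measurable s)
    (hs0 : ∀ z, 0 ≤ s z) :
    ∫⁻ z, ENNReal.ofReal (s z)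
        ∂(μ.withDensity fun x => 1 - g x).prod (μ.withDensity fun x => g x - 1) ≤
      2 * (∫⁻ x, ENNReal.ofReal (klFun (g x)) ∂μ) *
        ∫⁻ z, ENNReal.ofReal (Real.exp (s z)) ∂μ.prod μ := by
  have hb1 (x : E) : 1 - g x ≤ 1 := tsub_le_self
  have hpos : ∫⁻ x, (g x : ℝ≥0∞) - 1 ∂μ = ∫⁻ x, 1 - (g x : ℝ≥0∞) ∂μ :=
    lintegral_tsub_comm (by fun_prop) measurable_const (by simpa using hg1) (by simp [hg1])
  have hle : ∫⁻ x, 1 - (g x : ℝ≥0∞) ∂μ ≤ 1 :=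
    (lintegral_mono fun x => tsub_le_self).trans_eq (by simp)
  rcases eq_or_ne (∫⁻ x, 1 - (g x : ℝ≥0∞) ∂μ) 0 with h0 | h0
  · have : μ.withDensity (fun x => 1 - (g x : ℝ≥0∞)) = 0 := by
      rw [← Measure.measure_univ_eq_zero, withDensity_apply _ MeasurableSet.univ,
        setLIntegral_univ, h0]
    simp [this]
  lift ∫⁻ x, 1 - (g x : ℝ≥0∞) ∂μ to ℝ≥0 using ne_top_of_le_ne_top ENNReal.one_ne_top hle
    with t ht
  have hJ : ∫⁻ z, ENNReal.ofReal (s z)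
        ∂(μ.withDensity fun x => 1 - g x).prod (μ.withDensity fun x => g x - 1) =
      ∫⁻ z, (1 - g z.1 : ℝ≥0) * (g z.2 - 1 : ℝ≥0) * ENNReal.ofReal (s z) ∂μ.prod μ := by
    rw [prod_withDensity (by fun_prop) (by fun_prop),
      lintegral_withDensity_eq_lintegral_mul _ (by fun_prop) (by fun_prop)]
    simp
  have hint := lintegral_prod_add_sq_le_klFun_add_exp (b := fun x => 1 - g x)
    (a := fun x => g x - 1) (t := t) (by fun_prop) (by fun_prop) hs hb1 hs0 (by exact_mod_cast h0)
    (by exact_mod_cast hle) (by simpa using ht.symm) (by simpa using hpos)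
  rw [lintegral_klFun_one_add_add_klFun_one_sub hg, ← hJ] at hint
  have hsq : (t : ℝ≥0∞) ^ 2 ≤ 2 * ∫⁻ x, ENNReal.ofReal (klFun (g x)) ∂μ := by
    rw [← lintegral_klFun_one_add_add_klFun_one_sub hg, ht]
    refine le_trans ?_ (mul_le_mul_right le_add_self _)
    simpa using sq_lintegral_le_two_mul_lintegral_klFun_one_sub (μ := μ) (b := fun x => 1 - g x)
      (by fun_prop) hb1
  have hexp : 1 ≤ ∫⁻ z, ENNReal.ofReal (Real.exp (s z)) ∂μ.prod μ := by
    calc 1 = ∫⁻ _, 1 ∂μ.prod μ := by simp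
      _ ≤ _ := lintegral_mono fun z => by simpa using hs0 z
  exact le_mul_of_add_le_add_mul (by finiteness) hsq hexp hint

end EntropyInequality

section TransportFromMoment

variable {E : Type*} [MeasurableSpace E] {d : E → E → ℝ}

/-- The square-exponential moment `∬ exp(δ d(x,y)²) dμ(x) dμ(y)` of the cost `d` under two
independent copies of `μ`, valued in `ℝ≥0∞`. -/
def sqExpMoment (d : E → E → ℝ) (μ : Measure E) (δ : ℝ) : ℝ≥0∞ :=
  ∫⁻ x, ∫⁻ y, ENNReal.ofReal (Real.exp (δ * d x y ^ 2)) ∂μ ∂μ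

lemma one_le_sqExpMoment (d : E → E → ℝ) (μ : Measure E) [IsProbabilityMeasure μ] {δ : ℝ}
    (hδ : 0 ≤ δ) : 1 ≤ sqExpMoment d μ δ :=
  calc (1 : ℝ≥0∞) = ∫⁻ _, ∫⁻ _, 1 ∂μ ∂μ := by simp
    _ ≤ sqExpMoment d μ δ := lintegral_mono fun x => lintegral_mono fun y => by
      rw [ENNReal.one_le_ofReal]
      exact Real.one_le_exp (by positivity)

lemma one_le_toReal_sqExpMoment {μ : Measure E} [IsProbabilityMeasure μ] {δ : ℝ} (hδ : 0 ≤ δ)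
    (hM : sqExpMoment d μ δ ≠ ∞) : 1 ≤ (sqExpMoment d μ δ).toReal :=
  ENNReal.toReal_one ▸ ENNReal.toReal_mono hM (one_le_sqExpMoment d μ hδ)

lemma ofReal_mul_wassersteinDist_one_sq_le (hd : Measurable fun q : E × E => d q.1 q.2)
    (hd0 : ∀ x, d x x = 0) {μ : Measure E} [IsProbabilityMeasure μ] {g : E → ℝ≥0}
    (hg : Measurable g) (hg1 : ∫⁻ x, g x ∂μ = 1) {δ : ℝ} (hδ : 0 ≤ δ) :
    ENNReal.ofReal δ * wassersteinDist 1 d μ (μ.withDensity fun x => g x) ^ 2 ≤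
      2 * (∫⁻ x, ENNReal.ofReal (klFun (g x)) ∂μ) * sqExpMoment d μ δ := by
  have hW := wassersteinDist_one_withDensity_sq_le hd hd0 (μ := μ) (f := 1) (g := fun x => g x)
    measurable_one (by fun_prop) (by simpa using hg1.symm) (by simp)
  rw [withDensity_one] at hW
  calc ENNReal.ofReal δ * wassersteinDist 1 d μ (μ.withDensity fun x => g x) ^ 2
      ≤ ENNReal.ofReal δ * ∫⁻ z, ENNReal.ofReal (d z.1 z.2) ^ 2
          ∂(μ.withDensity fun x => 1 - g x).prod (μ.withDensity fun x => g x - 1) := by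
        gcongr; exact hW
    _ ≤ ∫⁻ z, ENNReal.ofReal (δ * d z.1 z.2 ^ 2)
          ∂(μ.withDensity fun x => 1 - g x).prod (μ.withDensity fun x => g x - 1) := by
        rw [← lintegral_const_mul _ (by fun_prop)]
        refine lintegral_mono fun z => ?_
        rw [ENNReal.ofReal_mul hδ]
        gcongr
        rcases le_total 0 (d z.1 z.2) with h | h
        · rw [ENNReal.ofReal_pow h]
        · simp [ENNReal.ofReal_of_nonpos h]
    _ ≤ 2 * (∫⁻ x, ENNReal.ofReal (klFun (g x)) ∂μ) *
          ∫⁻ z, ENNReal.ofReal (Real.exp (δ * d z.1 z.2 ^ 2)) ∂μ.prod μ :=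
        lintegral_prod_tsub_le_klFun_mul_exp hg hg1 (by fun_prop) fun z => by positivity
    _ = 2 * (∫⁻ x, ENNReal.ofReal (klFun (g x)) ∂μ) * sqExpMoment d μ δ := by
        rw [lintegral_prod _ (by fun_prop), sqExpMoment]

lemma relEntropy_eq_klDiv (ν μ : Measure E) [IsProbabilityMeasure ν] [IsProbabilityMeasure μ] :
    relEntropy ν μ = klDiv ν μ := by
  rw [relEntropy, klDiv_def]
  simp only [llr_def, probReal_univ, add_sub_cancel_right]
  congr

lemma ofReal_mul_wassersteinDist_one_sq_le_relEntropy
    (hd : Measurable fun q : E × E => d q.1 q.2) (hd0 : ∀ x, d x x = 0) {μ ν : Measure E}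
    [IsProbabilityMeasure μ] [IsProbabilityMeasure ν] {δ : ℝ} (hδ : 0 ≤ δ) :
    ENNReal.ofReal δ * wassersteinDist 1 d μ ν ^ 2 ≤
      2 * relEntropy ν μ * sqExpMoment d μ δ := by
  rw [relEntropy_eq_klDiv, klDiv_eq_lintegral_klFun]
  split_ifs with hac
  · have hg : (fun x => ((ν.rnDeriv μ x).toNNReal : ℝ≥0∞)) =ᵐ[μ] ν.rnDeriv μ :=
      (ν.rnDeriv_lt_top μ).mono fun x hx => ENNReal.coe_toNNReal hx.ne
    have h := ofReal_mul_wassersteinDist_one_sq_le hd hd0 (μ := μ)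
      (g := fun x => (ν.rnDeriv μ x).toNNReal) (by fun_prop)
      (by rw [lintegral_congr_ae hg, Measure.lintegral_rnDeriv hac, measure_univ]) hδ
    rwa [withDensity_congr_ae hg, Measure.withDensity_rnDeriv_eq _ _ hac] at h
  · have hM := (zero_lt_one.trans_le (one_le_sqExpMoment d μ hδ)).ne'
    simp [ENNReal.top_mul hM]

lemma tpIneq_one_of_sqExpMoment_ne_top (hd : Measurable fun q : E × E => d q.1 q.2)
    (hd0 : ∀ x, d x x = 0) {μ : Measure E} [IsProbabilityMeasure μ] {δ : ℝ} (hδ : 0 < δ)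
    (hM : sqExpMoment d μ δ ≠ ∞) : TpIneq 1 d ((sqExpMoment d μ δ).toReal / δ) μ := by
  intro ν _
  have hδ' : ENNReal.ofReal δ ≠ 0 := by simpa using hδ
  refine (ENNReal.mul_le_mul_iff_right hδ' ENNReal.ofReal_ne_top).1 ?_
  calc ENNReal.ofReal δ * wassersteinDist 1 d μ ν ^ 2
      ≤ 2 * relEntropy ν μ * sqExpMoment d μ δ :=
        ofReal_mul_wassersteinDist_one_sq_le_relEntropy hd hd0 hδ.le
    _ = ENNReal.ofReal (2 * (sqExpMoment d μ δ).toReal) * relEntropy ν μ := by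
        rw [ENNReal.ofReal_mul zero_le_two, ENNReal.ofReal_toReal hM, ENNReal.ofReal_ofNat]
        ring
    _ = ENNReal.ofReal δ *
          (ENNReal.ofReal (2 * ((sqExpMoment d μ δ).toReal / δ)) * relEntropy ν μ) := by
        rw [← mul_assoc, ← ENNReal.ofReal_mul hδ.le]
        congr 2
        field_simp

lemma TpIneq.mono {p C C' : ℝ} {μ : Measure E} (h : TpIneq p d C μ) (hC : C ≤ C') :
    TpIneq p d C' μ := fun ν hν =>
  (h ν hν).trans (by gcongr)

end TransportFromMoment

section GaussianMomentRoots

/-- The `k`-th term `((k!)² / (2k)! · M)^{1/k}` of the family whose supremum gives the explicit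
transport constant; `M` stands for a finite square-exponential moment. -/
def gaussianMomentRoot (M : ℝ) (k : ℕ+) : ℝ :=
  ((Nat.factorial (k : ℕ) : ℝ) ^ 2 / (Nat.factorial (2 * (k : ℕ))) * M) ^ (1 / ((k : ℕ) : ℝ))

lemma gaussianMomentRoot_one (M : ℝ) : gaussianMomentRoot M 1 = M / 2 := by
  norm_num [gaussianMomentRoot, div_eq_inv_mul]

lemma gaussianMomentRoot_le {M : ℝ} (hM : 1 ≤ M) (k : ℕ+) : gaussianMomentRoot M k ≤ M := by
  have hk : (1 : ℝ) ≤ (k : ℕ) := by exact_mod_cast k.pos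
  have hfac : (Nat.factorial (k : ℕ) : ℝ) ^ 2 / (Nat.factorial (2 * (k : ℕ))) ≤ 1 := by
    rw [div_le_one (by positivity), sq, two_mul]
    exact_mod_cast Nat.le_of_dvd (Nat.factorial_pos _)
      (Nat.factorial_mul_factorial_dvd_factorial_add k k)
  calc gaussianMomentRoot M k ≤ M ^ (1 / ((k : ℕ) : ℝ)) :=
        Real.rpow_le_rpow (by positivity) (mul_le_of_le_one_left (by linarith) hfac)
          (by positivity)
    _ ≤ M := Real.rpow_le_self_of_one_le hM ((div_le_one (by linarith)).2 hk)

lemma bddAbove_range_gaussianMomentRoot {M : ℝ} (hM : 1 ≤ M) :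
    BddAbove (Set.range (gaussianMomentRoot M)) :=
  ⟨M, Set.forall_mem_range.2 (gaussianMomentRoot_le hM)⟩

lemma le_two_mul_iSup_gaussianMomentRoot {M : ℝ} (hM : 1 ≤ M) :
    M ≤ 2 * ⨆ k, gaussianMomentRoot M k := by
  have h := le_ciSup (bddAbove_range_gaussianMomentRoot hM) 1
  rw [gaussianMomentRoot_one] at h
  linarith

end GaussianMomentRoots

section GaussianConcentration

variable {E : Type*} [MeasurableSpace E]

lemma relEntropy_cond (μ : Measure E) [IsProbabilityMeasure μ] {B : Set E}
    (hB : MeasurableSet B) (hB0 : μ B ≠ 0) :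
    relEntropy (cond μ B) μ = ENNReal.ofReal (-Real.log (μ.real B)) := by
  have hprob := cond_isProbabilityMeasure hB0
  have hac : cond μ B ≪ μ := cond_absolutelyContinuous
  have hrn : (cond μ B).rnDeriv μ =ᵐ[μ] (μ B)⁻¹ • B.indicator 1 := by
    refine (Measure.rnDeriv_smul_left_of_ne_top (μ.restrict B) μ
      (ENNReal.inv_ne_top.2 hB0)).trans ?_
    filter_upwards [Measure.rnDeriv_restrict_self μ hB] with x hx
    simp [hx]
  have hlog : (fun x => Real.log (((cond μ B).rnDeriv μ x).toReal)) =ᵐ[cond μ B]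
      fun _ => -Real.log (μ.real B) := by
    filter_upwards [hac.ae_le hrn, ae_cond_mem hB] with x hx hxB
    simp [hx, hxB, Measure.real]
  rw [relEntropy, if_pos ⟨hac, (integrable_const _).congr hlog.symm⟩, integral_congr_ae hlog]
  simp

lemma neg_log_measureReal_nonneg (μ : Measure E) [IsProbabilityMeasure μ] (B : Set E) :
    0 ≤ -Real.log (μ.real B) :=
  neg_nonneg.2 (Real.log_nonpos measureReal_nonneg measureReal_le_one)

lemma TpIneq.wassersteinDist_cond_le {p C : ℝ} {d : E → E → ℝ} {μ : Measure E}
    [IsProbabilityMeasure μ] (h : TpIneq p d C μ) (hC : 0 ≤ C) {B : Set E}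
    (hB : MeasurableSet B) (hB0 : μ B ≠ 0) :
    wassersteinDist p d μ (cond μ B) ≤ ENNReal.ofReal (√(2 * C * -Real.log (μ.real B))) := by
  have hlog := neg_log_measureReal_nonneg μ B
  refine (ENNReal.pow_le_pow_left_iff two_ne_zero).1 ?_
  rw [← ENNReal.ofReal_pow (Real.sqrt_nonneg _), Real.sq_sqrt (by positivity),
    ENNReal.ofReal_mul (by positivity), ← relEntropy_cond μ hB hB0]
  exact h _ (cond_isProbabilityMeasure hB0)

/- The mean of `f` may be infinite a priori, so the laws conditioned on `A` and on `B` are compared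
through the truncation `(f - r)⁺`, which vanishes on `A`. -/
lemma TpIneq.sub_le_sqrt_add_sqrt {C : ℝ} {d : E → E → ℝ} (hsymm : ∀ x y, d x y = d y x)
    {μ : Measure E} [IsProbabilityMeasure μ] (h : TpIneq 1 d C μ) (hC : 0 ≤ C) {f : E → ℝ}
    (hf : Measurable f) (hfd : ∀ x y, f x - f y ≤ d x y) {A B : Set E} (hA : MeasurableSet A)
    (hB : MeasurableSet B) (hA0 : μ A ≠ 0) (hB0 : μ B ≠ 0) {r t : ℝ} (hr : ∀ x ∈ A, f x ≤ r)
    (ht : ∀ x ∈ B, t ≤ f x) :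
    t - r ≤ √(2 * C * -Real.log (μ.real A)) + √(2 * C * -Real.log (μ.real B)) := by
  have := cond_isProbabilityMeasure hB0
  have hF : Measurable fun x => ENNReal.ofReal (f x - r) := by fun_prop
  have hlip (x y : E) :
      ENNReal.ofReal (f x - r) ≤ ENNReal.ofReal (f y - r) + ENNReal.ofReal (d x y) :=
    (ENNReal.ofReal_le_ofReal (by linarith [hfd x y])).trans ENNReal.ofReal_add_le
  have hzero : ∫⁻ x, ENNReal.ofReal (f x - r) ∂cond μ A = 0 :=
    lintegral_eq_zero_of_ae_eq_zero <| (ae_cond_mem hA).mono fun x hx =>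
      ENNReal.ofReal_of_nonpos (sub_nonpos.2 (hr x hx))
  refine (ENNReal.ofReal_le_ofReal_iff (by positivity)).1 ?_
  calc ENNReal.ofReal (t - r) = ∫⁻ _, ENNReal.ofReal (t - r) ∂cond μ B := by simp
    _ ≤ ∫⁻ x, ENNReal.ofReal (f x - r) ∂cond μ B :=
      lintegral_mono_ae <| (ae_cond_mem hB).mono fun x hx =>
        ENNReal.ofReal_le_ofReal (sub_le_sub_right (ht x hx) r)
    _ ≤ ∫⁻ x, ENNReal.ofReal (f x - r) ∂μ + wassersteinDist 1 d (cond μ B) μ :=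
      lintegral_le_lintegral_add_wassersteinDist hF hF hlip
    _ ≤ (∫⁻ x, ENNReal.ofReal (f x - r) ∂cond μ A + wassersteinDist 1 d μ (cond μ A)) +
          wassersteinDist 1 d (cond μ B) μ := by
      gcongr; exact lintegral_le_lintegral_add_wassersteinDist hF hF hlip
    _ ≤ ENNReal.ofReal (√(2 * C * -Real.log (μ.real A))) +
          ENNReal.ofReal (√(2 * C * -Real.log (μ.real B))) := by
      rw [hzero, zero_add, wassersteinDist_comm hsymm 1 (cond μ B)]
      exact add_le_add (h.wassersteinDist_cond_le hC hA hA0) (h.wassersteinDist_cond_le hC hB hB0)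
    _ = _ := (ENNReal.ofReal_add (by positivity) (by positivity)).symm

lemma TpIneq.exists_measureReal_le_exp {C : ℝ} {d : E → E → ℝ} (hsymm : ∀ x y, d x y = d y x)
    {μ : Measure E} [IsProbabilityMeasure μ] (h : TpIneq 1 d C μ) (hC : 0 < C) {f : E → ℝ}
    (hf : Measurable f) (hfd : ∀ x y, f x - f y ≤ d x y) :
    ∃ m : ℝ, ∀ t, m ≤ t → μ.real {x | t ≤ f x} ≤ Real.exp (-((t - m) ^ 2 / (2 * C))) := by
  have hA (r : ℝ) : MeasurableSet {x | f x ≤ r} := measurableSet_le hf measurable_const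
  have hB (t : ℝ) : MeasurableSet {x | t ≤ f x} := measurableSet_le measurable_const hf
  obtain ⟨n, hn⟩ : ∃ n : ℕ, 0 < μ {x | f x ≤ n} := by
    refine exists_measure_pos_of_not_measure_iUnion_null ?_
    have huniv : ⋃ n : ℕ, {x | f x ≤ n} = Set.univ :=
      Set.iUnion_eq_univ_iff.2 fun x => exists_nat_ge (f x)
    simp [huniv]
  refine ⟨n + √(2 * C * -Real.log (μ.real {x | f x ≤ n})), fun t ht => ?_⟩
  by_cases hB0 : μ {x | t ≤ f x} = 0
  · simp [Measure.real, hB0, Real.exp_nonneg]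
  have hpos : 0 < μ.real {x | t ≤ f x} := ENNReal.toReal_pos hB0 (measure_ne_top _ _)
  have hlog := neg_log_measureReal_nonneg μ {x | t ≤ f x}
  have hle := h.sub_le_sqrt_add_sqrt hsymm hC.le hf hfd (hA n) (hB t) hn.ne' hB0
    (fun _ hx => hx) fun _ hx => hx
  have hsq : (t - (n + √(2 * C * -Real.log (μ.real {x | f x ≤ n})))) ^ 2 ≤
      2 * C * -Real.log (μ.real {x | t ≤ f x}) :=
    (Real.le_sqrt (by linarith) (by positivity)).1 (by linarith)
  rw [← Real.log_le_iff_le_exp hpos, le_neg, div_le_iff₀ (by positivity)]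
  linarith

lemma summable_exp_quadratic {a : ℝ} (ha : a < 0) (b c : ℝ) :
    Summable fun n : ℕ => Real.exp (a * n ^ 2 + b * n + c) := by
  have h := summable_of_isBigO_nat (Real.summable_nat_rpow.2 (by norm_num : (-2 : ℝ) < -1))
    ((rexp_neg_quadratic_isLittleO_rpow_atTop ha b (-2)).isBigO.comp_tendsto
      tendsto_natCast_atTop_atTop)
  exact (h.mul_right (Real.exp c)).congr fun n => (Real.exp_add _ c).symm

lemma lintegral_comp_le_tsum {μ : Measure E} {f : E → ℝ} (hf : Measurable f)
    (hf0 : ∀ x, 0 ≤ f x) {φ : ℝ → ℝ≥0∞} (hφ : MonotoneOn φ (Set.Ici 0)) :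
    ∫⁻ x, φ (f x) ∂μ ≤ ∑' n : ℕ, φ (n + 1) * μ {x | n ≤ f x} := by
  have hmeas (n : ℕ) : MeasurableSet {x | (n : ℝ) ≤ f x} := measurableSet_le measurable_const hf
  have hpt (x : E) :
      φ (f x) ≤ ∑' n : ℕ, {x | (n : ℝ) ≤ f x}.indicator (fun _ => φ (n + 1)) x := by
    refine le_trans ?_ (ENNReal.le_tsum ⌊f x⌋₊)
    rw [Set.indicator_of_mem (by exact Nat.floor_le (hf0 x))]
    exact hφ (hf0 x) (Set.mem_Ici.2 (by positivity)) (Nat.lt_floor_add_one (f x)).le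
  calc ∫⁻ x, φ (f x) ∂μ
      ≤ ∫⁻ x, ∑' n : ℕ, {x | (n : ℝ) ≤ f x}.indicator (fun _ => φ (n + 1)) x ∂μ :=
        lintegral_mono hpt
    _ = ∑' n : ℕ, φ (n + 1) * μ {x | n ≤ f x} := by
      rw [lintegral_tsum fun n => (measurable_const.indicator (hmeas n)).aemeasurable]
      simp only [lintegral_indicator_const (hmeas _)]

lemma lintegral_exp_mul_sq_lt_top {μ : Measure E} [IsFiniteMeasure μ] {f : E → ℝ}
    (hf : Measurable f) (hf0 : ∀ x, 0 ≤ f x) {a c m : ℝ} (ha : 0 ≤ a) (hac : a < c)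
    (htail : ∀ t, m ≤ t → μ.real {x | t ≤ f x} ≤ Real.exp (-(c * (t - m) ^ 2))) :
    ∫⁻ x, ENNReal.ofReal (Real.exp (a * f x ^ 2)) ∂μ < ∞ := by
  have hmono : MonotoneOn (fun r : ℝ => ENNReal.ofReal (Real.exp (a * r ^ 2))) (Set.Ici 0) :=
    fun r (hr : 0 ≤ r) s _ hrs => by
      dsimp only
      gcongr
  have hsum : Summable fun n : ℕ =>
      Real.exp (a * (n + 1) ^ 2) * μ.real {x | n ≤ f x} := by
    refine .of_norm_bounded_eventually_nat (summable_exp_quadratic (sub_neg.2 hac)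
      (2 * a + 2 * c * m) (a - c * m ^ 2)) ?_
    filter_upwards [Filter.eventually_ge_atTop ⌈m⌉₊] with n hn
    rw [Real.norm_of_nonneg (by positivity)]
    calc Real.exp (a * (n + 1) ^ 2) * μ.real {x | n ≤ f x}
        ≤ Real.exp (a * (n + 1) ^ 2) * Real.exp (-(c * (n - m) ^ 2)) := by
          gcongr; exact htail n (Nat.ceil_le.1 hn)
      _ = _ := by rw [← Real.exp_add]; ring_nf
  refine (lintegral_comp_le_tsum hf hf0 hmono).trans_lt (lt_of_eq_of_lt ?_ hsum.tsum_ofReal_lt_top)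
  refine tsum_congr fun n => ?_
  rw [ENNReal.ofReal_mul (Real.exp_nonneg _), ofReal_measureReal]

lemma sqExpMoment_dist_le [PseudoMetricSpace E] {μ : Measure E}
    (hd : Measurable fun q : E × E => dist q.1 q.2) {δ : ℝ} (hδ : 0 ≤ δ) (x₀ : E) :
    sqExpMoment dist μ δ ≤ (∫⁻ x, ENNReal.ofReal (Real.exp (2 * δ * dist x x₀ ^ 2)) ∂μ) ^ 2 := by
  have hdx : Measurable fun x => dist x x₀ := hd.comp measurable_prodMk_right
  have hpt (x y : E) : ENNReal.ofReal (Real.exp (δ * dist x y ^ 2)) ≤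
      ENNReal.ofReal (Real.exp (2 * δ * dist x x₀ ^ 2)) *
        ENNReal.ofReal (Real.exp (2 * δ * dist y x₀ ^ 2)) := by
    rw [← ENNReal.ofReal_mul (Real.exp_nonneg _), ← Real.exp_add]
    gcongr
    calc δ * dist x y ^ 2 ≤ δ * (dist x x₀ + dist y x₀) ^ 2 := by
          gcongr; exact dist_triangle_right x y x₀
      _ ≤ δ * (2 * (dist x x₀ ^ 2 + dist y x₀ ^ 2)) := by gcongr; exact add_sq_le
      _ = _ := by ring
  refine (lintegral_mono fun x => lintegral_mono (hpt x)).trans_eq ?_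
  rw [lintegral_lintegral_mul (by fun_prop) (by fun_prop), sq]

lemma TpIneq.sqExpMoment_lt_top [PseudoMetricSpace E] {μ : Measure E} [IsProbabilityMeasure μ]
    (hd : Measurable fun q : E × E => dist q.1 q.2) {C δ : ℝ} (h : TpIneq 1 dist C μ)
    (hC : 0 < C) (hδ : 0 ≤ δ) (hδC : 4 * δ * C < 1) : sqExpMoment dist μ δ < ∞ := by
  obtain ⟨x₀⟩ : Nonempty E := nonempty_of_isProbabilityMeasure μ
  have hdx : Measurable fun x => dist x x₀ := hd.comp measurable_prodMk_right
  obtain ⟨m, htail⟩ := h.exists_measureReal_le_exp dist_comm hC hdx fun x y =>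
    sub_le_iff_le_add.2 (dist_triangle x y x₀)
  have hlt : 2 * δ < 1 / (2 * C) := by
    rw [lt_div_iff₀ (by positivity)]
    linarith
  have hfin := lintegral_exp_mul_sq_lt_top hdx (fun _ => dist_nonneg) (by positivity) hlt
    fun t ht => (htail t ht).trans_eq (by rw [div_mul_eq_mul_div, one_mul])
  exact (sqExpMoment_dist_le hd hδ x₀).trans_lt (ENNReal.pow_lt_top hfin)

end GaussianConcentration

theorem T1_iff_gaussian_tail_general {E : Type*} [MeasurableSpace E] [PseudoMetricSpace E]
    (hd : Measurable fun q : E × E => dist q.1 q.2) (μ : Measure E) [IsProbabilityMeasure μ] :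
    ((∃ C : ℝ, 0 < C ∧ TpIneq 1 dist C μ) ↔ ∃ δ : ℝ, 0 < δ ∧ sqExpMoment dist μ δ < ∞) ∧
      ∀ δ : ℝ, 0 < δ → sqExpMoment dist μ δ < ∞ →
        BddAbove (Set.range (gaussianMomentRoot (sqExpMoment dist μ δ).toReal)) ∧
          TpIneq 1 dist (2 / δ * ⨆ k, gaussianMomentRoot (sqExpMoment dist μ δ).toReal k) μ := by
  refine ⟨⟨?_, ?_⟩, fun δ hδ hM => ?_⟩
  · rintro ⟨C, hC, h⟩
    exact ⟨1 / (8 * C), by positivity,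
      h.sqExpMoment_lt_top hd hC (by positivity) (by field_simp; norm_num)⟩
  · rintro ⟨δ, hδ, hM⟩
    have hM1 := one_le_toReal_sqExpMoment hδ.le hM.ne
    exact ⟨_, by positivity, tpIneq_one_of_sqExpMoment_ne_top hd dist_self hδ hM.ne⟩
  · have hM1 := one_le_toReal_sqExpMoment hδ.le hM.ne
    refine ⟨bddAbove_range_gaussianMomentRoot hM1,
      (tpIneq_one_of_sqExpMoment_ne_top hd dist_self hδ hM.ne).mono ?_⟩
    rw [div_mul_eq_mul_div]
    gcongr
    exact le_two_mul_iSup_gaussianMomentRoot hM1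

/-- **Theorem 2.3: Gaussian-tail characterization of `T₁`.** `μ` satisfies `T₁(C)` for some
`C > 0` iff it has a square-exponential moment (1.5); in that case the constant can be taken
to be `(2/δ) ⨆ k ((k!)²/(2k)! ∬ e^{δd²} dμ dμ)^{1/k}`, which is finite. -/
theorem T1_iff_gaussian_tail
    {E : Type*} [MeasurableSpace E] [MetricSpace E]
    (hd : Measurable fun q : E × E => dist q.1 q.2)
    (μ : Measure E) [IsProbabilityMeasure μ] :
    ((∃ C : ℝ, 0 < C ∧ TpIneq 1 dist C μ) ↔
      ∃ δ : ℝ, 0 < δ ∧ ∫⁻ x, ∫⁻ y, ENNReal.ofReal (Real.exp (δ * dist x y ^ 2)) ∂μ ∂μ < ∞) ∧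
    ∀ δ : ℝ, 0 < δ →
      ∫⁻ x, ∫⁻ y, ENNReal.ofReal (Real.exp (δ * dist x y ^ 2)) ∂μ ∂μ < ∞ →
      BddAbove (Set.range fun k : ℕ+ =>
        ((Nat.factorial (k : ℕ) : ℝ) ^ 2 / (Nat.factorial (2 * (k : ℕ))) *
            (∫⁻ x, ∫⁻ y, ENNReal.ofReal (Real.exp (δ * dist x y ^ 2)) ∂μ ∂μ).toReal) ^ (1 / ((k : ℕ) : ℝ))) ∧
      TpIneq 1 dist
        (2 / δ * ⨆ k : ℕ+,
          ((Nat.factorial (k : ℕ) : ℝ) ^ 2 / (Nat.factorial (2 * (k : ℕ))) *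
            (∫⁻ x, ∫⁻ y, ENNReal.ofReal (Real.exp (δ * dist x y ^ 2)) ∂μ ∂μ).toReal) ^ (1 / ((k : ℕ) : ℝ))) μ :=
  T1_iff_gaussian_tail_general hd μ

end
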